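/- For every weighted digraph on n ≥ 1 vertices with graph Laplacian L, the algebraic multiplicity of the eigenvalue 0 equals its geometric multiplicity: the root multiplicity of 0 in the characteristic polynomial of L equals the dimension (finrank over ℝ) of the kernel of the linear map x ↦ L *ᵥ x. -/

import Mathlib

open Matrix Polynomial

/-- The graph Laplacian `L = D - A` of a weighted digraph with weight matrix `w`. -/
def graphLaplacian {n : ℕ} (w : Fin n → Fin n → ℝ) : Matrix (Fin n) (Fin n) ℝ :=
  Matrix.diagonal (fun i => ∑ j, w i j) - Matrix.of w

/-!
Put the sup norm on `ι → 𝕜`. If the real part of each diagonal entry of `A` is at least the sum of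
the absolute values of the other entries in its row, then evaluating `x + s A x` at a coordinate
where `|x|` is maximal gives `‖x‖ ≤ ‖x + s A x‖` for all `s ≥ 0`. If moreover `A² x = 0`, then
replacing `x` by `x - s A x` turns this into `‖x - s A x‖ ≤ ‖x‖`, and letting `s → ∞` forces
`A x = 0`. So `A` has no Jordan block of size at least two at `0`.
-/

section AscentOne

variable {R M : Type*} [CommRing R] [AddCommGroup M] [Module R M] {f : Module.End R M}

lemma apply_eq_zero_of_pow_apply_eq_zero (hf : ∀ x, f (f x) = 0 → f x = 0) {k : ℕ} {x : M}
    (hx : (f ^ k) x = 0) : f x = 0 := by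
  induction k generalizing x with
  | zero => rw [show x = 0 from hx, map_zero]
  | succ k ih =>
    rw [pow_succ, Module.End.mul_apply] at hx
    exact hf x (ih hx)

lemma maxGenEigenspace_zero_eq_ker_of_apply_apply_eq_zero (hf : ∀ x, f (f x) = 0 → f x = 0) :
    f.maxGenEigenspace 0 = LinearMap.ker f := by
  ext x
  rw [Module.End.mem_maxGenEigenspace, zero_smul, sub_zero, LinearMap.mem_ker]
  exact ⟨fun ⟨_, hx⟩ => apply_eq_zero_of_pow_apply_eq_zero hf hx,
    fun hx => ⟨1, by rwa [pow_one]⟩⟩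

end AscentOne

section Accretive

variable {𝕜 E : Type*} [RCLike 𝕜] [NormedAddCommGroup E] [NormedSpace 𝕜 E]

/-- Accretive operators on a normed space: those for which `1 + s f` does not decrease norms for any
real `s ≥ 0`. This is the formulation that makes no reference to an inner product or to duality
maps. -/
def IsAccretive (f : Module.End 𝕜 E) : Prop :=
  ∀ s : ℝ, 0 ≤ s → ∀ x, ‖x‖ ≤ ‖x + (s : 𝕜) • f x‖

namespace IsAccretive

variable {f : Module.End 𝕜 E}

lemma norm_sub_smul_apply_le (hf : IsAccretive f) {x : E} (hx : f (f x) = 0) {s : ℝ}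
    (hs : 0 ≤ s) : ‖x - (s : 𝕜) • f x‖ ≤ ‖x‖ := by
  simpa only [map_sub, map_smul, hx, smul_zero, sub_zero, sub_add_cancel]
    using hf s hs (x - (s : 𝕜) • f x)

lemma apply_eq_zero_of_apply_apply_eq_zero (hf : IsAccretive f) {x : E} (hx : f (f x) = 0) :
    f x = 0 := by
  have mul_norm_le : ∀ s : ℝ, 0 ≤ s → s * ‖f x‖ ≤ 2 * ‖x‖ := fun s hs =>
    calc s * ‖f x‖ = ‖(s : 𝕜) • f x‖ := by rw [norm_smul, RCLike.norm_of_nonneg hs]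
      _ = ‖x - (x - (s : 𝕜) • f x)‖ := by rw [sub_sub_cancel]
      _ ≤ ‖x‖ + ‖x - (s : 𝕜) • f x‖ := norm_sub_le _ _
      _ ≤ 2 * ‖x‖ := by linarith [hf.norm_sub_smul_apply_le hx hs]
  by_contra hfx
  obtain ⟨n, hn⟩ := Archimedean.arch (2 * ‖x‖ + 1) (norm_pos_iff.mpr hfx)
  rw [nsmul_eq_mul] at hn
  linarith [mul_norm_le n n.cast_nonneg]

theorem rootMultiplicity_zero_charpoly_eq_finrank_ker [FiniteDimensional 𝕜 E] (hf : IsAccretive f) :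
    f.charpoly.rootMultiplicity 0 = Module.finrank 𝕜 (LinearMap.ker f) := by
  rw [← LinearMap.finrank_maxGenEigenspace_eq,
    maxGenEigenspace_zero_eq_ker_of_apply_apply_eq_zero
      fun _ => hf.apply_eq_zero_of_apply_apply_eq_zero]

end IsAccretive

end Accretive

section DiagonallyDominant

variable {ι : Type*} [Fintype ι]

lemma norm_sum_mul_le {R : Type*} [NonUnitalSeminormedRing R] (t : Finset ι) (a x : ι → R) :
    ‖∑ j ∈ t, a j * x j‖ ≤ (∑ j ∈ t, ‖a j‖) * ‖x‖ := by
  rw [Finset.sum_mul]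
  refine norm_sum_le_of_le t fun j _ => (norm_mul_le _ _).trans ?_
  gcongr
  exact norm_le_pi_norm x j

variable [DecidableEq ι]

lemma mulVec_apply_eq_diag_add_sum_erase {R : Type*} [NonUnitalNonAssocSemiring R]
    (A : Matrix ι ι R) (x : ι → R) (i : ι) :
    (A *ᵥ x) i = A i i * x i + ∑ j ∈ Finset.univ.erase i, A i j * x j :=
  (Finset.add_sum_erase _ _ (Finset.mem_univ i)).symm

variable {𝕜 : Type*} [RCLike 𝕜] {A : Matrix ι ι 𝕜}

lemma norm_le_norm_apply_add_mul_mulVec_apply {i : ι}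
    (hA : ∑ j ∈ Finset.univ.erase i, ‖A i j‖ ≤ RCLike.re (A i i))
    {x : ι → 𝕜} (hx : ‖x‖ ≤ ‖x i‖) {s : ℝ} (hs : 0 ≤ s) :
    ‖x‖ ≤ ‖x i + (s : 𝕜) * (A *ᵥ x) i‖ := by
  set offDiag := ∑ j ∈ Finset.univ.erase i, A i j * x j with offDiag_def
  have diag_le : (1 + s * RCLike.re (A i i)) * ‖x‖ ≤ ‖(1 + (s : 𝕜) * A i i) * x i‖ := by
    rw [norm_mul]
    gcongr
    simpa using RCLike.re_le_norm (1 + (s : 𝕜) * A i i)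
  have offDiag_le : ‖(s : 𝕜) * offDiag‖ ≤ s * (RCLike.re (A i i) * ‖x‖) := by
    rw [norm_mul, RCLike.norm_of_nonneg hs]
    gcongr
    exact (norm_sum_mul_le _ _ x).trans (by gcongr)
  calc ‖x‖ = (1 + s * RCLike.re (A i i)) * ‖x‖ - s * (RCLike.re (A i i) * ‖x‖) := by ring
    _ ≤ ‖(1 + (s : 𝕜) * A i i) * x i‖ - ‖(s : 𝕜) * offDiag‖ := sub_le_sub diag_le offDiag_le
    _ ≤ ‖(1 + (s : 𝕜) * A i i) * x i + (s : 𝕜) * offDiag‖ := norm_sub_le_norm_add _ _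
    _ = ‖x i + (s : 𝕜) * (A *ᵥ x) i‖ := by
      rw [mulVec_apply_eq_diag_add_sum_erase, ← offDiag_def]
      ring_nf

lemma isAccretive_mulVecLin_of_sum_row_le_re_diag
    (hA : ∀ i, ∑ j ∈ Finset.univ.erase i, ‖A i j‖ ≤ RCLike.re (A i i)) :
    IsAccretive A.mulVecLin := by
  intro s hs x
  cases isEmpty_or_nonempty ι
  · rw [Subsingleton.elim x 0, norm_zero]
    exact norm_nonneg _
  obtain ⟨i, hi⟩ := Finite.exists_max fun j => ‖x j‖
  have norm_le : ‖x‖ ≤ ‖x i‖ := (pi_norm_le_iff_of_nonempty _).mpr hi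
  exact (norm_le_norm_apply_add_mul_mulVec_apply (hA i) norm_le hs).trans
    (norm_le_pi_norm (x + (s : 𝕜) • A *ᵥ x) i)

theorem algebraic_eq_geometric_multiplicity_zero_general
    (hA : ∀ i, ∑ j ∈ Finset.univ.erase i, ‖A i j‖ ≤ RCLike.re (A i i)) :
    A.charpoly.rootMultiplicity 0 = Module.finrank 𝕜 (LinearMap.ker A.mulVecLin) := by
  rw [← Matrix.charpoly_mulVecLin]
  have hacc := isAccretive_mulVecLin_of_sum_row_le_re_diag hA
  exact hacc.rootMultiplicity_zero_charpoly_eq_finrank_ker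

end DiagonallyDominant

section Laplacian

variable {n : ℕ} (w : Fin n → Fin n → ℝ)

lemma graphLaplacian_apply_self (i : Fin n) :
    graphLaplacian w i i = ∑ j ∈ Finset.univ.erase i, w i j := by
  rw [Finset.sum_erase_eq_sub (Finset.mem_univ i)]
  simp [graphLaplacian]

lemma graphLaplacian_apply_of_ne {i j : Fin n} (hij : i ≠ j) : graphLaplacian w i j = -w i j := by
  simp [graphLaplacian, hij]

variable {w}

lemma sum_erase_norm_graphLaplacian (hw : ∀ i j, 0 ≤ w i j) (i : Fin n) :
    ∑ j ∈ Finset.univ.erase i, ‖graphLaplacian w i j‖ = graphLaplacian w i i := by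
  rw [graphLaplacian_apply_self]
  refine Finset.sum_congr rfl fun j hj => ?_
  rw [graphLaplacian_apply_of_ne w (Finset.ne_of_mem_erase hj).symm, norm_neg,
    Real.norm_of_nonneg (hw i j)]

end Laplacian

/-- For the graph Laplacian of a weighted digraph, the algebraic multiplicity of the
eigenvalue `0` equals its geometric multiplicity. -/
theorem algebraic_eq_geometric_multiplicity_zero (n : ℕ) (hn : 1 ≤ n)
    (w : Fin n → Fin n → ℝ) (hw : ∀ i j, 0 ≤ w i j) (hdiag : ∀ i, w i i = 0) :
    (graphLaplacian w).charpoly.rootMultiplicity 0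
      = Module.finrank ℝ (LinearMap.ker (graphLaplacian w).mulVecLin) :=
  algebraic_eq_geometric_multiplicity_zero_general fun i => (sum_erase_norm_graphLaplacian hw i).le
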